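/- Let (V, μ, α) be a finite-dimensional G-Hom-associative algebra for a subgroup G of S₃. Then the dual space V* with comultiplication Δ = μ* (the transpose of μ) and twisting map β = α* is a G-Hom-coalgebra: Σ_{σ∈G} sgn(σ) Φ_σ ∘ c_β(Δ) = 0. -/

import Mathlib

open TensorProduct

noncomputable section

variable (K : Type*) [Field K] (M : Type*) [AddCommGroup M] [Module K M]

/-- The permutation `Φ_{(12)}` of the first two tensor factors of `M ⊗ (M ⊗ M)`. -/
def phi12 : M ⊗[K] (M ⊗[K] M) →ₗ[K] M ⊗[K] (M ⊗[K] M) :=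
  (TensorProduct.assoc K M M M).toLinearMap ∘ₗ
    LinearMap.rTensor M (TensorProduct.comm K M M).toLinearMap ∘ₗ
      (TensorProduct.assoc K M M M).symm.toLinearMap

/-- The permutation `Φ_{(23)}` of the last two tensor factors. -/
def phi23 : M ⊗[K] (M ⊗[K] M) →ₗ[K] M ⊗[K] (M ⊗[K] M) :=
  LinearMap.lTensor M (TensorProduct.comm K M M).toLinearMap

/-- `Φ_{(13)}`: x₁⊗x₂⊗x₃ ↦ x₃⊗x₂⊗x₁. -/
def phi13 : M ⊗[K] (M ⊗[K] M) →ₗ[K] M ⊗[K] (M ⊗[K] M) :=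
  phi12 K M ∘ₗ phi23 K M ∘ₗ phi12 K M

/-- `Φ_{(213)}`: x₁⊗x₂⊗x₃ ↦ x₂⊗x₃⊗x₁. -/
def phi213 : M ⊗[K] (M ⊗[K] M) →ₗ[K] M ⊗[K] (M ⊗[K] M) :=
  phi23 K M ∘ₗ phi12 K M

/-- `Φ_{(231)}`: x₁⊗x₂⊗x₃ ↦ x₃⊗x₁⊗x₂. -/
def phi231 : M ⊗[K] (M ⊗[K] M) →ₗ[K] M ⊗[K] (M ⊗[K] M) :=
  phi12 K M ∘ₗ phi23 K M

/-- The `β`-coassociator `c_β(Δ) = (Δ⊗β)∘Δ - (β⊗Δ)∘Δ`, valued in `M ⊗ (M ⊗ M)`. -/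
def coassociator (Δ : M →ₗ[K] M ⊗[K] M) (β : M →ₗ[K] M) :
    M →ₗ[K] M ⊗[K] (M ⊗[K] M) :=
  (TensorProduct.assoc K M M M).toLinearMap ∘ₗ TensorProduct.map Δ β ∘ₗ Δ
    - TensorProduct.map β Δ ∘ₗ Δ

/-- The opposite comultiplication `Δ^op = τ ∘ Δ`. -/
def deltaOp (Δ : M →ₗ[K] M ⊗[K] M) : M →ₗ[K] M ⊗[K] M :=
  (TensorProduct.comm K M M).toLinearMap ∘ₗ Δ

/-- The map `Φ_σ` on `M ⊗ (M ⊗ M)` induced by `σ ∈ S₃` (on positions `0,1,2`),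
`x₁⊗x₂⊗x₃ ↦ x_{σ⁻¹(1)}⊗x_{σ⁻¹(2)}⊗x_{σ⁻¹(3)}`. -/
def Phi (σ : Equiv.Perm (Fin 3)) : M ⊗[K] (M ⊗[K] M) →ₗ[K] M ⊗[K] (M ⊗[K] M) :=
  if σ = 1 then LinearMap.id
  else if σ = Equiv.swap 0 1 then phi12 K M
  else if σ = Equiv.swap 1 2 then phi23 K M
  else if σ = Equiv.swap 0 2 then phi13 K M
  else if σ = Equiv.swap 0 1 * Equiv.swap 1 2 then phi231 K M
  else phi213 K M

/-- The pairing of `M* ⊗ (M* ⊗ M*)` with `M ⊗ (M ⊗ M)`. -/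
def pair3 : Module.Dual K M ⊗[K] (Module.Dual K M ⊗[K] Module.Dual K M) →ₗ[K]
    Module.Dual K (M ⊗[K] (M ⊗[K] M)) :=
  TensorProduct.dualDistrib K M (M ⊗[K] M) ∘ₗ
    LinearMap.lTensor (Module.Dual K M) (TensorProduct.dualDistrib K M M)

theorem pair3_tmul (f g h : Module.Dual K M) (x y z : M) :
    pair3 K M (f ⊗ₜ (g ⊗ₜ h)) (x ⊗ₜ (y ⊗ₜ z)) = f x * (g y * h z) := by
  simp [pair3]

theorem pair3_injective [FiniteDimensional K M] : Function.Injective (pair3 K M) := by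
  have h1 : Function.Injective (TensorProduct.dualDistrib K M (M ⊗[K] M)) :=
    (TensorProduct.dualDistribEquiv K M (M ⊗[K] M)).injective
  have h2 : Function.Injective (TensorProduct.dualDistrib K M M) :=
    (TensorProduct.dualDistribEquiv K M M).injective
  have h3 := Module.Flat.lTensor_preserves_injective_linearMap (M := Module.Dual K M)
    (TensorProduct.dualDistrib K M M) h2
  exact h1.comp h3

theorem pair3_phi12 (t : Module.Dual K M ⊗[K] (Module.Dual K M ⊗[K] Module.Dual K M))
    (x : M ⊗[K] (M ⊗[K] M)) :
    pair3 K M (phi12 K _ t) x = pair3 K M t (phi12 K M x) := by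
  suffices h : pair3 K M ∘ₗ phi12 K _ = (phi12 K M).dualMap ∘ₗ pair3 K M from
    LinearMap.congr_fun (LinearMap.congr_fun h t) x
  ext f g h x y z
  simp [phi12, pair3_tmul]
  ring

theorem pair3_phi23 (t : Module.Dual K M ⊗[K] (Module.Dual K M ⊗[K] Module.Dual K M))
    (x : M ⊗[K] (M ⊗[K] M)) :
    pair3 K M (phi23 K _ t) x = pair3 K M t (phi23 K M x) := by
  suffices h : pair3 K M ∘ₗ phi23 K _ = (phi23 K M).dualMap ∘ₗ pair3 K M from
    LinearMap.congr_fun (LinearMap.congr_fun h t) x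
  ext f g h x y z
  simp only [phi23, pair3_tmul, AlgebraTensorModule.curry_apply, LinearMap.restrictScalars_self,
    curry_apply, LinearMap.comp_apply, LinearMap.lTensor_tmul, LinearEquiv.coe_coe, comm_tmul,
    LinearMap.dualMap_apply]
  ring

theorem perm3_cases : ∀ σ : Equiv.Perm (Fin 3), σ = 1 ∨ σ = Equiv.swap 0 1 ∨
    σ = Equiv.swap 1 2 ∨ σ = Equiv.swap 0 2 ∨ σ = Equiv.swap 0 1 * Equiv.swap 1 2 ∨
    σ = Equiv.swap 1 2 * Equiv.swap 0 1 := by decide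

theorem Phi_one : Phi K M 1 = LinearMap.id := if_pos rfl

theorem Phi_01 : Phi K M (Equiv.swap 0 1) = phi12 K M := by
  rw [Phi, if_neg (by decide), if_pos rfl]

theorem Phi_12 : Phi K M (Equiv.swap 1 2) = phi23 K M := by
  rw [Phi, if_neg (by decide), if_neg (by decide), if_pos rfl]

theorem Phi_02 : Phi K M (Equiv.swap 0 2) = phi13 K M := by
  rw [Phi, if_neg (by decide), if_neg (by decide), if_neg (by decide), if_pos rfl]

theorem Phi_0112 : Phi K M (Equiv.swap 0 1 * Equiv.swap 1 2) = phi231 K M := by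
  rw [Phi, if_neg (by decide), if_neg (by decide), if_neg (by decide), if_neg (by decide),
    if_pos rfl]

theorem Phi_1201 : Phi K M (Equiv.swap 1 2 * Equiv.swap 0 1) = phi213 K M := by
  rw [Phi, if_neg (by decide), if_neg (by decide), if_neg (by decide), if_neg (by decide),
    if_neg (by decide)]

theorem pair3_Phi (σ : Equiv.Perm (Fin 3))
    (t : Module.Dual K M ⊗[K] (Module.Dual K M ⊗[K] Module.Dual K M))
    (x : M ⊗[K] (M ⊗[K] M)) :
    pair3 K M (Phi K _ σ t) x = pair3 K M t (Phi K M σ⁻¹ x) := by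
  rcases perm3_cases σ with h | h | h | h | h | h <;> subst h <;>
    simp only [inv_one, mul_inv_rev, Equiv.swap_inv, Phi_one, Phi_01, Phi_12, Phi_02, Phi_0112,
      Phi_1201, phi13, phi213, phi231, LinearMap.comp_apply, pair3_phi12, pair3_phi23,
      LinearMap.id_apply]

theorem pair3_assoc (s : Module.Dual K M ⊗[K] Module.Dual K M) (h : Module.Dual K M)
    (x y z : M) :
    pair3 K M (TensorProduct.assoc K _ _ _ (s ⊗ₜ h)) (x ⊗ₜ (y ⊗ₜ z)) =
      TensorProduct.dualDistrib K M M s (x ⊗ₜ y) * h z := by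
  induction s with
  | zero => simp
  | tmul f g => simp [pair3_tmul, mul_assoc]
  | add a b ha hb => simp [add_tmul, ha, hb, add_mul]

theorem dualDistrib_delta [FiniteDimensional K M] (μ : M ⊗[K] M →ₗ[K] M)
    (f : Module.Dual K M) :
    TensorProduct.dualDistrib K M M
      ((TensorProduct.dualDistribEquiv K M M).symm (μ.dualMap f)) = μ.dualMap f :=
  (TensorProduct.dualDistribEquiv K M M).apply_symm_apply _

theorem pair3_left [FiniteDimensional K M] (μ : M ⊗[K] M →ₗ[K] M) (α : M →ₗ[K] M)
    (t : Module.Dual K M ⊗[K] Module.Dual K M) (x y z : M) :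
    pair3 K M (TensorProduct.assoc K _ _ _ (TensorProduct.map
      ((TensorProduct.dualDistribEquiv K M M).symm.toLinearMap ∘ₗ μ.dualMap) α.dualMap t))
      (x ⊗ₜ (y ⊗ₜ z)) =
    TensorProduct.dualDistrib K M M t (μ (x ⊗ₜ y) ⊗ₜ α z) := by
  induction t with
  | zero => simp
  | tmul f g =>
    rw [TensorProduct.map_tmul, pair3_assoc, LinearMap.comp_apply, LinearEquiv.coe_coe,
      dualDistrib_delta]
    simp
  | add a b ha hb => simp only [map_add, LinearMap.add_apply, ha, hb]

theorem pair3_right [FiniteDimensional K M] (μ : M ⊗[K] M →ₗ[K] M) (α : M →ₗ[K] M)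
    (t : Module.Dual K M ⊗[K] Module.Dual K M) (x y z : M) :
    pair3 K M (TensorProduct.map α.dualMap
      ((TensorProduct.dualDistribEquiv K M M).symm.toLinearMap ∘ₗ μ.dualMap) t)
      (x ⊗ₜ (y ⊗ₜ z)) =
    TensorProduct.dualDistrib K M M t (α x ⊗ₜ μ (y ⊗ₜ z)) := by
  induction t with
  | zero => simp
  | tmul f g =>
    rw [TensorProduct.map_tmul, LinearMap.comp_apply, LinearEquiv.coe_coe, pair3,
      LinearMap.comp_apply, LinearMap.lTensor_tmul, dualDistrib_delta]
    simp
  | add a b ha hb => simp only [map_add, LinearMap.add_apply, ha, hb]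

theorem coassociator_apply (Δ : M →ₗ[K] M ⊗[K] M) (β : M →ₗ[K] M) (f : M) :
    coassociator K M Δ β f =
      TensorProduct.assoc K M M M (TensorProduct.map Δ β (Δ f)) - TensorProduct.map β Δ (Δ f) :=
  rfl

theorem pair3_coassociator [FiniteDimensional K M] (μ : M ⊗[K] M →ₗ[K] M) (α : M →ₗ[K] M)
    (f : Module.Dual K M) (w : M ⊗[K] (M ⊗[K] M)) :
    pair3 K M (coassociator K (Module.Dual K M)
          ((TensorProduct.dualDistribEquiv K M M).symm.toLinearMap ∘ₗ μ.dualMap)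
          α.dualMap f) w =
    f ((μ ∘ₗ TensorProduct.map μ α ∘ₗ (TensorProduct.assoc K M M M).symm.toLinearMap
          - μ ∘ₗ TensorProduct.map α μ) w) := by
  suffices h : pair3 K M (coassociator K (Module.Dual K M)
          ((TensorProduct.dualDistribEquiv K M M).symm.toLinearMap ∘ₗ μ.dualMap)
          α.dualMap f) =
    f ∘ₗ (μ ∘ₗ TensorProduct.map μ α ∘ₗ (TensorProduct.assoc K M M M).symm.toLinearMap
          - μ ∘ₗ TensorProduct.map α μ) from LinearMap.congr_fun h w
  refine TensorProduct.ext' fun x u => ?_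
  induction u with
  | zero => simp only [tmul_zero, map_zero]
  | add a b ha hb => simp only [tmul_add, map_add, ha, hb]
  | tmul y z =>
    rw [coassociator_apply]
    refine (LinearMap.congr_fun (map_sub (pair3 K M) _ _) _).trans ?_
    rw [LinearMap.sub_apply]
    rw [pair3_left, pair3_right]
    simp only [LinearMap.comp_apply, LinearEquiv.coe_coe, dualDistrib_delta]
    simp

set_option synthInstance.maxHeartbeats 1000000 in
open scoped Classical in
/-- the dual of a finite-dimensional `G`-Hom-associative algebra
`(V, μ, α)` is a `G`-Hom-coalgebra, with `Δ = μ*` (transpose of `μ`, using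
`V*⊗V* ≅ (V⊗V)*` in finite dimension) and `β = α*`. -/
theorem dual_of_GHomAssociative [FiniteDimensional K M]
    (G : Subgroup (Equiv.Perm (Fin 3)))
    (μ : M ⊗[K] M →ₗ[K] M) (α : M →ₗ[K] M)
    (hG : ∑ σ : G, ((Equiv.Perm.sign (σ : Equiv.Perm (Fin 3)) : ℤ) •
        ((μ ∘ₗ TensorProduct.map μ α ∘ₗ (TensorProduct.assoc K M M M).symm.toLinearMap
          - μ ∘ₗ TensorProduct.map α μ) ∘ₗ Phi K M (σ : Equiv.Perm (Fin 3)))) = 0) :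
    ∑ σ : G, ((Equiv.Perm.sign (σ : Equiv.Perm (Fin 3)) : ℤ) •
      (Phi K (Module.Dual K M) (σ : Equiv.Perm (Fin 3)) ∘ₗ
        coassociator K (Module.Dual K M)
          ((TensorProduct.dualDistribEquiv K M M).symm.toLinearMap ∘ₗ μ.dualMap)
          α.dualMap)) = 0 := by
  refine LinearMap.ext fun f => pair3_injective K M (LinearMap.ext fun w => ?_)
  have h := congrArg f (LinearMap.congr_fun hG w)
  rw [LinearMap.zero_apply, map_zero, LinearMap.sum_apply, map_sum] at h
  rw [LinearMap.zero_apply, map_zero, LinearMap.zero_apply, LinearMap.sum_apply, map_sum,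
    LinearMap.sum_apply, ← h]
  refine Fintype.sum_equiv (Equiv.inv G) _ _ fun σ => ?_
  rw [LinearMap.smul_apply, LinearMap.smul_apply, map_zsmul]
  refine (LinearMap.congr_fun (map_zsmul (pair3 K M) _ _) _).trans ?_
  rw [LinearMap.smul_apply, LinearMap.comp_apply, LinearMap.comp_apply, pair3_Phi, pair3_coassociator]
  simp only [Equiv.inv_apply, Subgroup.coe_inv, Equiv.Perm.sign_inv]
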